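/- h(3,0;3,0;3,4) = 21. That is: (a) for every set X of 21 points in the plane in general position and every 3-coloring of X, there exist three points of color 1 whose convex hull contains no other point of X, or three points of color 2 whose convex hull contains no other point of X, or three points of color 3 whose interior-point count with respect to X is at most 4; and (b) there exists a set of 20 points in the plane in general position with a 3-coloring admitting none of these. -/

import Mathlib

/-!
A set `P` of points with `i` points that are not vertices of its hull is triangulated by
`|P| + i - 2` triangles (`exists_triang`: non-vertices are inserted into a triangulation of the rest,
and a convex polygon loses an ear). Each triangle with vertices in one color class must contain
points of `X`, so the hull of the class contains at least that many points of other colors.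

*Upper bound.* Let `R`, `B`, `G` be the three classes and suppose there is no forbidden triangle.
Triangulate the red points `P` of a convex region, and then the blue points `Q` of the hull of `P`.
Red points in the hull of `Q` are non-vertices of `P`, so the two counts combine (`two_step`) to
`|P| + i_Q + s ≤ 4 + g_P + g_Q`, where `s` counts the red non-vertices outside the hull of `Q` and
`g_P`, `g_Q` the green points in the two hulls. Inside the hull of `G` this gives at most `4 + 2 i_G`
red points and as many blue points, while the green triangulation needs `5 (|G| + i_G - 2)` of them;
hence `|G| ≤ 3`. In the whole plane, `|R|` and `|B|` are at most `4 + 2 |G|`, and `|G| ≤ 2` leaves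
fewer than 21 points. For `|G| = 3` and 21 points all inequalities are tight. The green triangle then
contains at least five red and blue points, so three of one color; these form a triangle with a point
of the other color in it, and that point is a non-vertex of a set which tightness puts in convex
position (`card_in_third_le_two`).

*Lower bound.* Twenty lattice points, nine red, eight blue and three green, whose finitely many
orientations are evaluated in the integers (`exInside_card`).
-/

/-- A finite point set in the plane is in general position if no three
distinct points of it are collinear. -/
def GenPos (X : Finset (ℝ × ℝ)) : Prop :=
  ∀ p ∈ X, ∀ q ∈ X, ∀ r ∈ X, p ≠ q → p ≠ r → q ≠ r →
    ¬ Collinear ℝ ({p, q, r} : Set (ℝ × ℝ))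

/-- A finite point set is in convex position if none of its points lies in the
convex hull of the remaining ones. -/
def ConvexPos (C : Finset (ℝ × ℝ)) : Prop :=
  ∀ p ∈ C, p ∉ convexHull ℝ ((C : Set (ℝ × ℝ)) \ {p})

/-- The number of points of `X` lying in the convex hull of `C` but not
belonging to `C` (the interior-point count of `C` with respect to `X`). -/
noncomputable def intCount (X C : Finset (ℝ × ℝ)) : ℕ :=
  (((X : Set (ℝ × ℝ)) ∩ convexHull ℝ (C : Set (ℝ × ℝ))) \ (C : Set (ℝ × ℝ))).ncard

/-- Cross product / orientation determinant of the triple `(p, q, r)`. -/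
def cross (p q r : ℝ × ℝ) : ℝ :=
  (q.1 - p.1) * (r.2 - p.2) - (q.2 - p.2) * (r.1 - p.1)

/-- `r` and `s` lie strictly on opposite sides of the line through `p` and `q`. -/
def OppSides (p q r s : ℝ × ℝ) : Prop :=
  cross p q r * cross p q s < 0

/-- The number of points of `X`, other than `p, q, r, s`, lying in the region
`conv {p,q,r} ∪ conv {p,q,s}` of the quadrilateral with diagonal `pq`. -/
noncomputable def quadCount (X : Finset (ℝ × ℝ)) (p q r s : ℝ × ℝ) : ℕ :=
  (((X : Set (ℝ × ℝ)) ∩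
      (convexHull ℝ ({p, q, r} : Set (ℝ × ℝ)) ∪ convexHull ℝ ({p, q, s} : Set (ℝ × ℝ)))) \
    ({p, q, r, s} : Set (ℝ × ℝ))).ncard

/-- `X` with coloring `χ` contains three points of color `i` with at most `k`
interior points. -/
def HasTri {c : ℕ} (X : Finset (ℝ × ℝ)) (χ : ℝ × ℝ → Fin c) (i : Fin c) (k : ℕ) : Prop :=
  ∃ C ⊆ X, C.card = 3 ∧ (∀ p ∈ C, χ p = i) ∧ intCount X C ≤ k

/-! ### Convex hulls in the plane -/

open Classical in
/-- The points of `P` that are not vertices of the convex hull of `P`. -/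
noncomputable def nonExt (P : Finset (ℝ × ℝ)) : Finset (ℝ × ℝ) :=
  P.filter fun x => x ∈ convexHull ℝ (↑(P.erase x) : Set (ℝ × ℝ))

lemma mem_nonExt {P : Finset (ℝ × ℝ)} {x : ℝ × ℝ} :
    x ∈ nonExt P ↔ x ∈ P ∧ x ∈ convexHull ℝ (↑(P.erase x) : Set (ℝ × ℝ)) := by
  classical
  simp [nonExt]

lemma nonExt_subset (P : Finset (ℝ × ℝ)) : nonExt P ⊆ P :=
  fun _ hx => (mem_nonExt.1 hx).1

lemma Convex.three_mem {s : Set (ℝ × ℝ)} (hs : Convex ℝ s) {a b c : ℝ × ℝ} (ha : a ∈ s)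
    (hb : b ∈ s) (hc : c ∈ s) {u v w : ℝ} (hu : 0 ≤ u) (hv : 0 ≤ v) (hw : 0 ≤ w)
    (h : u + v + w = 1) : u • a + v • b + w • c ∈ s := by
  have := hs.sum_mem (t := Finset.univ) (w := ![u, v, w]) (z := ![a, b, c])
    (by intro i _; fin_cases i <;> simpa) (by simp [Fin.sum_univ_three, h])
    (by intro i _; fin_cases i <;> simpa)
  simpa [Fin.sum_univ_three] using this

/-- A point of `P` in the hull of other points of `conv P` is not a vertex of `conv P`. -/
lemma mem_nonExt_of_mem_hull {P : Finset (ℝ × ℝ)} {Q : Set (ℝ × ℝ)} {x : ℝ × ℝ} (hxP : x ∈ P)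
    (hQ : Q ⊆ convexHull ℝ (P : Set (ℝ × ℝ))) (hxQ : x ∉ Q) (hx : x ∈ convexHull ℝ Q) :
    x ∈ nonExt P := by
  classical
  by_contra hn
  have hC : x ∉ convexHull ℝ (↑(P.erase x) : Set (ℝ × ℝ)) := fun h => hn (mem_nonExt.2 ⟨hxP, h⟩)
  set C := convexHull ℝ (↑(P.erase x) : Set (ℝ × ℝ)) with hCdef
  have hCc : Convex ℝ C := convex_convexHull ℝ _
  have hrep : ∀ a ∈ convexHull ℝ (P : Set (ℝ × ℝ)), a ≠ x →
      ∃ α : ℝ, ∃ u ∈ C, 0 ≤ α ∧ α < 1 ∧ a = α • x + (1 - α) • u := by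
    intro a ha hax
    have hP : (P : Set (ℝ × ℝ)) = insert x (↑(P.erase x) : Set (ℝ × ℝ)) := by
      rw [← Finset.coe_insert, Finset.insert_erase hxP]
    rcases (P.erase x).eq_empty_or_nonempty with h0 | h0
    · rw [hP, h0] at ha
      simp at ha
      exact absurd ha hax
    · rw [hP, convexHull_insert (Finset.coe_nonempty.2 h0), mem_convexJoin] at ha
      obtain ⟨y, hy, u, hu, s, t, hs, ht, hst, rfl⟩ := ha
      rw [Set.mem_singleton_iff] at hy
      subst hy
      refine ⟨s, u, hu, hs, ?_, by rw [← hst]; simp⟩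
      rcases (by linarith : s ≤ 1).lt_or_eq with h | h
      · exact h
      · exfalso; apply hax
        have : t = 0 := by linarith
        simp [this, h]
  have hconv : Convex ℝ (convexHull ℝ (P : Set (ℝ × ℝ)) \ {x}) := by
    rw [convex_iff_forall_pos]
    rintro a ⟨ha, hax⟩ b ⟨hb, hbx⟩ s t hs ht hst
    refine ⟨(convex_convexHull ℝ _) ha hb hs.le ht.le hst, ?_⟩
    intro hx'
    rw [Set.mem_singleton_iff] at hx'
    obtain ⟨α, u, hu, hα, hα1, rfl⟩ := hrep a ha hax
    obtain ⟨β, v, hv, hβ, hβ1, rfl⟩ := hrep b hb hbx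
    have hpos : 0 < s * (1 - α) + t * (1 - β) := by
      have := mul_pos hs (sub_pos.2 hα1)
      have := mul_pos ht (sub_pos.2 hβ1)
      linarith
    apply hC
    set d := s * (1 - α) + t * (1 - β) with hd
    have key : x = (s * (1 - α) / d) • u + (t * (1 - β) / d) • v := by
      have h1 : d • x = (s * (1 - α)) • u + (t * (1 - β)) • v := by
        have e : d = 1 - (s * α + t * β) := by rw [hd]; linear_combination hst
        rw [e, sub_smul, one_smul]
        nth_rewrite 1 [← hx']
        module
      have h2 : x = d⁻¹ • (d • x) := by rw [smul_smul, inv_mul_cancel₀ hpos.ne', one_smul]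
      rw [h2, h1, smul_add, smul_smul, smul_smul]
      congr 2 <;> ring
    rw [key]
    refine hCc hu hv (div_nonneg (mul_nonneg hs.le (by linarith)) hpos.le)
      (div_nonneg (mul_nonneg ht.le (by linarith)) hpos.le) ?_
    rw [← add_div, div_self hpos.ne']
  have hsub : Q ⊆ convexHull ℝ (P : Set (ℝ × ℝ)) \ {x} := fun q hq =>
    ⟨hQ hq, fun h => hxQ (by rw [Set.mem_singleton_iff] at h; rwa [← h])⟩
  exact (convexHull_min hsub hconv hx).2 rfl

/-- Removing a point that is not a vertex of the hull does not change the other non-vertices. -/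
lemma nonExt_eq_insert {P : Finset (ℝ × ℝ)} {c : ℝ × ℝ} (hc : c ∈ nonExt P) :
    nonExt P = insert c (nonExt (P.erase c)) := by
  obtain ⟨hcP, hcH⟩ := mem_nonExt.1 hc
  have hPsub : (P : Set (ℝ × ℝ)) ⊆ convexHull ℝ (↑(P.erase c) : Set (ℝ × ℝ)) := by
    intro y hy
    by_cases h : y = c
    · rwa [h]
    · exact subset_convexHull ℝ _ (by simpa [h] using hy)
  ext x
  rw [Finset.mem_insert]
  constructor
  · intro hx
    by_cases h : x = c
    · exact Or.inl h
    right
    obtain ⟨hxP, hxH⟩ := mem_nonExt.1 hx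
    refine mem_nonExt_of_mem_hull (Q := ↑(P.erase x)) (by simp [h, hxP]) ?_ (by simp) hxH
    exact (Finset.coe_subset.2 (Finset.erase_subset _ _)).trans hPsub
  · rintro (rfl | hx)
    · exact hc
    · obtain ⟨hxP, hxH⟩ := mem_nonExt.1 hx
      refine mem_nonExt.2 ⟨Finset.mem_of_mem_erase hxP, convexHull_mono ?_ hxH⟩
      exact Finset.coe_subset.2 (Finset.erase_subset_erase _ (Finset.erase_subset _ _))

/-! ### Orientations -/

lemma cross_nonneg_of_mem_hull {s : Set (ℝ × ℝ)} {p q x : ℝ × ℝ} (h : ∀ y ∈ s, 0 ≤ cross p q y)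
    (hx : x ∈ convexHull ℝ s) : 0 ≤ cross p q x := by
  have hc : Convex ℝ {y | 0 ≤ cross p q y} := by
    intro a ha b hb u v hu hv huv
    simp only [Set.mem_ofPred_eq] at *
    have : cross p q (u • a + v • b) = u * cross p q a + v * cross p q b := by
      obtain rfl : v = 1 - u := by linarith
      simp only [cross, Prod.fst_add, Prod.snd_add, Prod.smul_fst, Prod.smul_snd, smul_eq_mul]
      ring
    rw [this]; positivity
  exact convexHull_min h hc hx

lemma mem_triangle_iff {a b c x : ℝ × ℝ} (h : 0 < cross a b c) :
    x ∈ convexHull ℝ ({a, b, c} : Set (ℝ × ℝ)) ↔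
      0 ≤ cross a b x ∧ 0 ≤ cross b c x ∧ 0 ≤ cross c a x := by
  constructor
  · intro hx
    refine ⟨cross_nonneg_of_mem_hull ?_ hx, cross_nonneg_of_mem_hull ?_ hx,
      cross_nonneg_of_mem_hull ?_ hx⟩ <;>
    · rintro y (rfl | rfl | rfl) <;> simp only [cross] at * <;> nlinarith
  · rintro ⟨h1, h2, h3⟩
    have hx : x = (cross b c x / cross a b c) • a + (cross c a x / cross a b c) • b +
        (cross a b x / cross a b c) • c := by
      ext
      · simp only [Prod.fst_add, Prod.smul_fst, smul_eq_mul]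
        field_simp
        simp only [cross]; ring
      · simp only [Prod.snd_add, Prod.smul_snd, smul_eq_mul]
        field_simp
        simp only [cross]; ring
    rw [hx]
    refine (convex_convexHull ℝ _).three_mem (subset_convexHull ℝ _ (by simp))
      (subset_convexHull ℝ _ (by simp)) (subset_convexHull ℝ _ (by simp))
      (by positivity) (by positivity) (by positivity) ?_
    field_simp
    simp only [cross]; ring

lemma collinear_iff_cross {p q r : ℝ × ℝ} (hpq : p ≠ q) :
    Collinear ℝ ({p, q, r} : Set (ℝ × ℝ)) ↔ cross p q r = 0 := by
  rw [collinear_iff_of_mem (p₀ := p) (by simp)]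
  constructor
  · rintro ⟨v, hv⟩
    obtain ⟨s, rfl⟩ := hv q (by simp)
    obtain ⟨t, rfl⟩ := hv r (by simp)
    simp [cross]; ring
  · intro h
    refine ⟨q - p, ?_⟩
    have : ∃ t : ℝ, r = t • (q - p) + p := by
      simp only [cross] at h
      by_cases h1 : q.1 - p.1 = 0
      · have h2 : q.2 - p.2 ≠ 0 := fun h2 => hpq (Prod.ext (by linarith) (by linarith))
        have h3 : r.1 - p.1 = 0 := by
          rw [h1] at h
          have : (q.2 - p.2) * (r.1 - p.1) = 0 := by linarith
          exact (mul_eq_zero.1 this).resolve_left h2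
        refine ⟨(r.2 - p.2) / (q.2 - p.2), ?_⟩
        ext
        · simp [h1]; linarith
        · simp; field_simp; ring
      · refine ⟨(r.1 - p.1) / (q.1 - p.1), ?_⟩
        ext
        · simp; field_simp; ring
        · simp; field_simp; linarith
    rintro y (rfl | rfl | rfl)
    · exact ⟨0, by simp⟩
    · exact ⟨1, by simp⟩
    · simpa using this

lemma GenPos.cross_ne {X : Finset (ℝ × ℝ)} (hX : GenPos X) {p q r : ℝ × ℝ} (hp : p ∈ X)
    (hq : q ∈ X) (hr : r ∈ X) (hpq : p ≠ q) (hpr : p ≠ r) (hqr : q ≠ r) : cross p q r ≠ 0 :=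
  fun h => hX p hp q hq r hr hpq hpr hqr ((collinear_iff_cross hpq).2 h)

lemma nonExt_eq_empty {X P : Finset (ℝ × ℝ)} (hX : GenPos X) (hP : P ⊆ X) (h3 : P.card ≤ 3) :
    nonExt P = ∅ := by
  rw [Finset.eq_empty_iff_forall_notMem]
  intro x hx
  obtain ⟨hxP, hxH⟩ := mem_nonExt.1 hx
  have hcard := Finset.card_erase_add_one hxP
  obtain h | h | h : (P.erase x).card = 0 ∨ (P.erase x).card = 1 ∨ (P.erase x).card = 2 := by omega
  · rw [Finset.card_eq_zero] at h
    rw [h] at hxH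
    simp at hxH
  · obtain ⟨a, ha⟩ := Finset.card_eq_one.1 h
    rw [ha] at hxH
    simp at hxH
    have : a ∈ P.erase x := by simp [ha]
    simp [hxH] at this
  · obtain ⟨a, b, hab, he⟩ := Finset.card_eq_two.1 h
    have ha : a ∈ P.erase x := by simp [he]
    have hb : b ∈ P.erase x := by simp [he]
    rw [Finset.mem_erase] at ha hb
    rw [he] at hxH
    have h1 : 0 ≤ cross a b x := cross_nonneg_of_mem_hull (by simp [cross, mul_comm]) hxH
    have h2 : 0 ≤ cross b a x := cross_nonneg_of_mem_hull (by simp [cross, mul_comm]) hxH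
    refine hX.cross_ne (hP ha.2) (hP hb.2) (hP hxP) hab ha.1 hb.1 ?_
    simp only [cross] at *
    linarith

/-! ### Triangulations -/

/-- `F` is a triangulation of `P` with vertex set `P`, encoded by incidences with the points of the
ambient set `X` only: every point of `X \ P` in the hull of `P` lies in exactly one triangle of `F`,
and no triangle of `F` contains further points of `P`. -/
structure IsTriang (X P : Finset (ℝ × ℝ)) (F : Finset (Finset (ℝ × ℝ))) : Prop where
  sub : ∀ T ∈ F, T ⊆ P
  card_three : ∀ T ∈ F, T.card = 3
  empty : ∀ T ∈ F, ∀ x ∈ P, x ∈ convexHull ℝ (T : Set (ℝ × ℝ)) → x ∈ T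
  cover : ∀ x ∈ X, x ∉ P → x ∈ convexHull ℝ (P : Set (ℝ × ℝ)) →
    ∃ T ∈ F, x ∈ convexHull ℝ (T : Set (ℝ × ℝ))
  disj : ∀ x ∈ X, x ∉ P → ∀ T ∈ F, ∀ T' ∈ F, x ∈ convexHull ℝ (T : Set (ℝ × ℝ)) →
    x ∈ convexHull ℝ (T' : Set (ℝ × ℝ)) → T = T'
  card_eq : F.card + 2 = P.card + (nonExt P).card

lemma exists_oriented {X T : Finset (ℝ × ℝ)} (hX : GenPos X) (hT : T ⊆ X) (h3 : T.card = 3) :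
    ∃ a b c, T = {a, b, c} ∧ a ≠ b ∧ a ≠ c ∧ b ≠ c ∧ 0 < cross a b c := by
  classical
  obtain ⟨a, b, c, hab, hac, hbc, rfl⟩ := Finset.card_eq_three.1 h3
  rcases lt_or_gt_of_ne (hX.cross_ne (hT (by simp)) (hT (by simp)) (hT (by simp)) hab hac hbc)
    with h | h
  · refine ⟨a, c, b, by ext; simp; tauto, hac, hab, hbc.symm, ?_⟩
    simp only [cross] at *; linarith
  · exact ⟨a, b, c, rfl, hab, hac, hbc, h⟩

/-- The rays from an interior point `c` of the triangle `a b d` to its corners cut the plane into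
three sectors, and every point lies in one of them. -/
lemma split_cover {a b c d x : ℝ × ℝ} (h1 : 0 < cross a b c) (h2 : 0 < cross b d c)
    (h3 : 0 < cross d a c) :
    (0 ≤ cross c a x ∧ cross c b x ≤ 0) ∨ (0 ≤ cross c b x ∧ cross c d x ≤ 0) ∨
      (0 ≤ cross c d x ∧ cross c a x ≤ 0) := by
  have key : cross b d c * cross c a x + cross d a c * cross c b x
      + cross a b c * cross c d x = 0 := by
    simp only [cross]; ring
  by_contra! hcon
  obtain ⟨k1, k2, k3⟩ := hcon
  rcases le_or_gt 0 (cross c a x) with hA | hA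
  · have hB := k1 hA
    have hD := k2 hB.le
    nlinarith [mul_nonneg h2.le hA, mul_pos h3 hB, mul_pos h1 hD]
  · have hD : cross c d x < 0 := by
      by_contra! h; linarith [k3 h]
    have hB : cross c b x < 0 := by
      by_contra! h; linarith [k2 h]
    nlinarith [mul_pos h2 (neg_pos.2 hA), mul_pos h3 (neg_pos.2 hB), mul_pos h1 (neg_pos.2 hD)]

/-- A triangulation of `P \ {c}`, with `c` inside the hull, extends to `P` by splitting the
triangle containing `c` into three. -/
lemma IsTriang.split {X P : Finset (ℝ × ℝ)} (hX : GenPos X) (hP : P ⊆ X) {c : ℝ × ℝ}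
    (hc : c ∈ nonExt P) {F : Finset (Finset (ℝ × ℝ))} (hF : IsTriang X (P.erase c) F) :
    ∃ F', IsTriang X P F' := by
  classical
  obtain ⟨hcP, hcH⟩ := mem_nonExt.1 hc
  obtain ⟨T, hTF, hcT⟩ := hF.cover c (hP hcP) (by simp) hcH
  have hTP := hF.sub T hTF
  obtain ⟨a, b, d, rfl, hab, had, hbd, hpos⟩ :=
    exists_oriented hX (hTP.trans ((Finset.erase_subset _ _).trans hP)) (hF.card_three T hTF)
  have ha := Finset.mem_erase.1 (hTP (show a ∈ ({a, b, d} : Finset (ℝ × ℝ)) by simp))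
  have hb := Finset.mem_erase.1 (hTP (show b ∈ ({a, b, d} : Finset (ℝ × ℝ)) by simp))
  have hd := Finset.mem_erase.1 (hTP (show d ∈ ({a, b, d} : Finset (ℝ × ℝ)) by simp))
  have hcT' : c ∈ convexHull ℝ ({a, b, d} : Set (ℝ × ℝ)) := by simpa using hcT
  obtain ⟨c1, c2, c3⟩ := (mem_triangle_iff hpos).1 hcT'
  have hne : ∀ p ∈ P, ∀ q ∈ P, ∀ r ∈ P, p ≠ q → p ≠ r → q ≠ r → cross p q r ≠ 0 :=
    fun p hp q hq r hr => hX.cross_ne (hP hp) (hP hq) (hP hr)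
  replace c1 := c1.lt_of_ne' (hne a ha.2 b hb.2 c hcP hab ha.1 hb.1)
  replace c2 := c2.lt_of_ne' (hne b hb.2 d hd.2 c hcP hbd hb.1 hd.1)
  replace c3 := c3.lt_of_ne' (hne d hd.2 a ha.2 c hcP had.symm hd.1 ha.1)
  -- the three new triangles
  set T1 : Finset (ℝ × ℝ) := {a, b, c} with hT1
  set T2 : Finset (ℝ × ℝ) := {b, d, c} with hT2
  set T3 : Finset (ℝ × ℝ) := {d, a, c} with hT3
  have m1 : ∀ x, x ∈ convexHull ℝ (T1 : Set (ℝ × ℝ)) ↔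
      0 ≤ cross a b x ∧ 0 ≤ cross b c x ∧ 0 ≤ cross c a x := by
    intro x; rw [hT1]; push_cast; exact mem_triangle_iff c1
  have m2 : ∀ x, x ∈ convexHull ℝ (T2 : Set (ℝ × ℝ)) ↔
      0 ≤ cross b d x ∧ 0 ≤ cross d c x ∧ 0 ≤ cross c b x := by
    intro x; rw [hT2]; push_cast; exact mem_triangle_iff c2
  have m3 : ∀ x, x ∈ convexHull ℝ (T3 : Set (ℝ × ℝ)) ↔
      0 ≤ cross d a x ∧ 0 ≤ cross a c x ∧ 0 ≤ cross c d x := by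
    intro x; rw [hT3]; push_cast; exact mem_triangle_iff c3
  have swap : ∀ p q x : ℝ × ℝ, cross p q x = - cross q p x := by
    intro p q x; simp only [cross]; ring
  have hsubT : ∀ S ∈ ({T1, T2, T3} : Finset (Finset (ℝ × ℝ))),
      convexHull ℝ (S : Set (ℝ × ℝ)) ⊆ convexHull ℝ (({a, b, d} : Finset (ℝ × ℝ)) : Set (ℝ × ℝ)) := by
    intro S hS
    refine convexHull_min ?_ (convex_convexHull ℝ _)
    have ha' : a ∈ convexHull ℝ (({a, b, d} : Finset (ℝ × ℝ)) : Set (ℝ × ℝ)) :=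
      subset_convexHull ℝ _ (by simp)
    have hb' : b ∈ convexHull ℝ (({a, b, d} : Finset (ℝ × ℝ)) : Set (ℝ × ℝ)) :=
      subset_convexHull ℝ _ (by simp)
    have hd' : d ∈ convexHull ℝ (({a, b, d} : Finset (ℝ × ℝ)) : Set (ℝ × ℝ)) :=
      subset_convexHull ℝ _ (by simp)
    simp only [Finset.mem_insert, Finset.mem_singleton] at hS
    rcases hS with rfl | rfl | rfl <;> intro y hy <;>
      simp only [hT1, hT2, hT3, Finset.coe_insert, Finset.coe_singleton, Set.mem_insert_iff,
        Set.mem_singleton_iff] at hy <;> rcases hy with rfl | rfl | rfl <;> assumption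
  have hnew : ∀ S ∈ ({T1, T2, T3} : Finset (Finset (ℝ × ℝ))), c ∈ S := by
    intro S hS
    simp only [Finset.mem_insert, Finset.mem_singleton] at hS
    rcases hS with rfl | rfl | rfl <;> simp [hT1, hT2, hT3]
  have hold : ∀ S ∈ F, c ∉ S := fun S hS h => by simpa using hF.sub S hS h
  have h12 : T1 ≠ T2 := fun h => by
    have : a ∈ T2 := h ▸ (by simp [hT1])
    simp [hT2, hab, had, ha.1] at this
  have h13 : T1 ≠ T3 := fun h => by
    have : b ∈ T3 := h ▸ (by simp [hT1])
    simp [hT3, hab.symm, hbd, hb.1] at this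
  have h23 : T2 ≠ T3 := fun h => by
    have : b ∈ T3 := h ▸ (by simp [hT2])
    simp [hT3, hab.symm, hbd, hb.1] at this
  have hcases : ∀ S, S ∈ F.erase {a, b, d} ∪ {T1, T2, T3} → (S ∈ F ∧ S ≠ {a, b, d}) ∨
      S ∈ ({T1, T2, T3} : Finset (Finset (ℝ × ℝ))) := by
    intro S hS
    rcases Finset.mem_union.1 hS with h | h
    · exact Or.inl ⟨Finset.mem_of_mem_erase h, Finset.ne_of_mem_erase h⟩
    · exact Or.inr h
  refine ⟨F.erase {a, b, d} ∪ {T1, T2, T3}, ?_, ?_, ?_, ?_, ?_, ?_⟩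
  · intro S hS
    rcases hcases S hS with h | h
    · exact (hF.sub S h.1).trans (Finset.erase_subset _ _)
    · simp only [Finset.mem_insert, Finset.mem_singleton] at h
      rcases h with rfl | rfl | rfl <;> intro y hy <;>
        simp only [hT1, hT2, hT3, Finset.mem_insert, Finset.mem_singleton] at hy <;>
        rcases hy with rfl | rfl | rfl <;> first | exact ha.2 | exact hb.2 | exact hd.2 | exact hcP
  · intro S hS
    rcases hcases S hS with h | h
    · exact hF.card_three S h.1
    · simp only [Finset.mem_insert, Finset.mem_singleton] at h
      rcases h with rfl | rfl | rfl
      · exact Finset.card_eq_three.2 ⟨a, b, c, hab, ha.1, hb.1, rfl⟩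
      · exact Finset.card_eq_three.2 ⟨b, d, c, hbd, hb.1, hd.1, rfl⟩
      · exact Finset.card_eq_three.2 ⟨d, a, c, had.symm, hd.1, ha.1, rfl⟩
  · intro S hS x hx hxS
    rcases hcases S hS with h | h
    · by_cases hxc : x = c
      · subst hxc
        exact absurd (hF.disj x (hP hx) (by simp) S h.1 _ hTF hxS hcT) h.2
      · exact hF.empty S h.1 x (by simp [hxc, hx]) hxS
    · by_cases hxc : x = c
      · subst hxc; exact hnew S h
      have hxT := hF.empty _ hTF x (by simp [hxc, hx]) (hsubT S h hxS)
      simp only [Finset.mem_insert, Finset.mem_singleton] at h hxT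
      rcases h with rfl | rfl | rfl
      · rw [m1] at hxS
        rcases hxT with rfl | rfl | rfl <;> simp only [hT1, Finset.mem_insert, Finset.mem_singleton,
          true_or, or_true]
        exfalso
        simp only [cross] at *; linarith
      · rw [m2] at hxS
        rcases hxT with rfl | rfl | rfl <;> simp only [hT2, Finset.mem_insert, Finset.mem_singleton,
          true_or, or_true]
        exfalso
        simp only [cross] at *; linarith
      · rw [m3] at hxS
        rcases hxT with rfl | rfl | rfl <;> simp only [hT3, Finset.mem_insert, Finset.mem_singleton,
          true_or, or_true]
        exfalso
        simp only [cross] at *; linarith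
  · intro x hxX hxP hxH
    have hxH' : x ∈ convexHull ℝ (↑(P.erase c) : Set (ℝ × ℝ)) := by
      refine convexHull_min ?_ (convex_convexHull ℝ _) hxH
      intro y hy
      by_cases h : y = c
      · rwa [h]
      · exact subset_convexHull ℝ _ (by simpa [h] using hy)
    obtain ⟨S, hS, hxS⟩ := hF.cover x hxX (fun h => hxP (Finset.mem_of_mem_erase h)) hxH'
    by_cases hST : S = {a, b, d}
    · subst hST
      have hxS' : x ∈ convexHull ℝ ({a, b, d} : Set (ℝ × ℝ)) := by simpa using hxS
      obtain ⟨x1, x2, x3⟩ := (mem_triangle_iff hpos).1 hxS'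
      rcases split_cover (x := x) c1 c2 c3 with h | h | h
      · exact ⟨T1, by simp, (m1 x).2 ⟨x1, by rw [swap]; linarith [h.2], h.1⟩⟩
      · exact ⟨T2, by simp, (m2 x).2 ⟨x2, by rw [swap]; linarith [h.2], h.1⟩⟩
      · exact ⟨T3, by simp, (m3 x).2 ⟨x3, by rw [swap]; linarith [h.2], h.1⟩⟩
    · exact ⟨S, by simp [hS, hST], hxS⟩
  · intro x hxX hxP S hS S' hS' hxS hxS'
    have hxP' : x ∉ P.erase c := fun h => hxP (Finset.mem_of_mem_erase h)
    have hx0 : ∀ p ∈ P, p ≠ c → cross c p x ≠ 0 := fun p hp hpc =>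
      hX.cross_ne (hP hcP) (hP hp) hxX (Ne.symm hpc) (fun h => hxP (h ▸ hcP))
        (fun h => hxP (h ▸ hp))
    have na := hx0 a ha.2 ha.1
    have nb := hx0 b hb.2 hb.1
    have nd := hx0 d hd.2 hd.1
    rcases hcases S hS with h | h <;> rcases hcases S' hS' with h' | h'
    · exact hF.disj x hxX hxP' S h.1 S' h'.1 hxS hxS'
    · exact absurd (hF.disj x hxX hxP' S h.1 _ hTF hxS (hsubT S' h' hxS')) h.2
    · exact absurd (hF.disj x hxX hxP' S' h'.1 _ hTF hxS' (hsubT S h hxS)) h'.2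
    · have e1 := swap b c x
      have e2 := swap d c x
      have e3 := swap a c x
      simp only [Finset.mem_insert, Finset.mem_singleton] at h h'
      rcases h with rfl | rfl | rfl <;> rcases h' with rfl | rfl | rfl <;> first | rfl | skip
      all_goals
        exfalso
        simp only [m1, m2, m3] at hxS hxS'
        first
        | exact na (by linarith)
        | exact nb (by linarith)
        | exact nd (by linarith)
  · have hd1 : Disjoint (F.erase {a, b, d}) {T1, T2, T3} := by
      rw [Finset.disjoint_left]
      intro S h h'
      exact hold S (Finset.mem_of_mem_erase h) (hnew S h')
    have e3 : ({T1, T2, T3} : Finset (Finset (ℝ × ℝ))).card = 3 :=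
      Finset.card_eq_three.2 ⟨T1, T2, T3, h12, h13, h23, rfl⟩
    have e4 := Finset.card_erase_add_one hTF
    have e5 := Finset.card_erase_add_one hcP
    have e6 := hF.card_eq
    have e7 : (nonExt P).card = (nonExt (P.erase c)).card + 1 := by
      rw [nonExt_eq_insert hc, Finset.card_insert_of_notMem]
      exact fun h => by simpa using nonExt_subset _ h
    rw [Finset.card_union_of_disjoint hd1, e3, e7]
    omega

/-- `q` comes after `p` in the lexicographic order of coordinates. -/
def LexLt (p q : ℝ × ℝ) : Prop := p.1 < q.1 ∨ (p.1 = q.1 ∧ p.2 < q.2)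

lemma exists_lexMin {P : Finset (ℝ × ℝ)} (h : P.Nonempty) :
    ∃ p ∈ P, ∀ q ∈ P, q ≠ p → LexLt p q := by
  obtain ⟨p, hp, hmin⟩ := Finset.exists_min_image P (fun x => toLex x) h
  refine ⟨p, hp, fun q hq hqp => ?_⟩
  have h1 := hmin q hq
  rw [Prod.Lex.toLex_le_toLex] at h1
  rcases h1 with h1 | ⟨h1, h2⟩
  · exact Or.inl h1
  · exact Or.inr ⟨h1, h2.lt_of_ne fun h3 => hqp (Prod.ext h1.symm h3.symm)⟩

/-- Seen from a lexicographically smaller point, the angular order is transitive. -/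
lemma cross_trans {p u v w : ℝ × ℝ} (hu : LexLt p u) (hv : LexLt p v) (hw : LexLt p w)
    (huv : 0 ≤ cross p u v) (hvw : 0 ≤ cross p v w) : 0 ≤ cross p u w := by
  have e1 : cross p u w * (v.1 - p.1) = cross p u v * (w.1 - p.1) + cross p v w * (u.1 - p.1) := by
    simp only [cross]; ring
  have e2 : cross p u w * (v.2 - p.2) = cross p u v * (w.2 - p.2) + cross p v w * (u.2 - p.2) := by
    simp only [cross]; ring
  have hu1 : 0 ≤ u.1 - p.1 := by rcases hu with h | h <;> linarith [h]
  have hw1 : 0 ≤ w.1 - p.1 := by rcases hw with h | h <;> linarith [h]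
  rcases hv with hv | ⟨hv1, hv2⟩
  · by_contra! hn
    have := mul_nonneg huv hw1
    have := mul_nonneg hvw hu1
    have := mul_pos_of_neg_of_neg hn (by linarith : p.1 - v.1 < 0)
    linarith
  · -- `v` is vertically above `p`, so `w` is too
    have hw0 : w.1 - p.1 = 0 := by
      simp only [cross] at hvw
      rw [← hv1] at hvw
      have h1 : (v.2 - p.2) * (w.1 - p.1) ≤ 0 := by linarith
      by_contra hne
      have := mul_pos (by linarith : 0 < v.2 - p.2) (hw1.lt_of_ne' hne)
      linarith
    have hw2 : 0 < w.2 - p.2 := by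
      rcases hw with h | ⟨_, h⟩ <;> linarith
    simp only [cross]
    rw [hw0]
    have := mul_nonneg hu1 hw2.le
    linarith

/-- The first and the last point of `Q` in the angular order around `p`. -/
lemma exists_first {p : ℝ × ℝ} {Q : Finset (ℝ × ℝ)} (hQ : Q.Nonempty) (hp : ∀ q ∈ Q, LexLt p q) :
    (∃ a ∈ Q, ∀ x ∈ Q, 0 ≤ cross p a x) ∧ (∃ b ∈ Q, ∀ x ∈ Q, 0 ≤ cross p x b) := by
  classical
  have self : ∀ q, 0 ≤ cross p q q := fun q => by simp only [cross]; linarith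
  have tot : ∀ q r, 0 ≤ cross p q r ∨ 0 ≤ cross p r q := fun q r => by
    have : cross p q r = - cross p r q := by simp only [cross]; ring
    rcases le_total 0 (cross p q r) with h | h
    · exact Or.inl h
    · right; linarith
  induction hQ using Finset.Nonempty.cons_induction with
  | singleton q => simpa using self q
  | cons q Q hq hQ ih =>
    have hpq := hp q (by simp)
    have hpQ : ∀ r ∈ Q, LexLt p r := fun r hr => hp r (by simp [hr])
    obtain ⟨⟨a, ha, haQ⟩, ⟨b, hb, hbQ⟩⟩ := ih hpQ
    constructor
    · rcases tot q a with h | h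
      · refine ⟨q, by simp, fun x hx => ?_⟩
        rcases Finset.mem_cons.1 hx with rfl | hx
        · exact self _
        · exact cross_trans hpq (hpQ a ha) (hpQ x hx) h (haQ x hx)
      · refine ⟨a, by simp [ha], fun x hx => ?_⟩
        rcases Finset.mem_cons.1 hx with rfl | hx
        · exact h
        · exact haQ x hx
    · rcases tot b q with h | h
      · refine ⟨q, by simp, fun x hx => ?_⟩
        rcases Finset.mem_cons.1 hx with rfl | hx
        · exact self _
        · exact cross_trans (hpQ x hx) (hpQ b hb) hpq (hbQ x hx) h
      · refine ⟨b, by simp [hb], fun x hx => ?_⟩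
        rcases Finset.mem_cons.1 hx with rfl | hx
        · exact h
        · exact hbQ x hx

/-- A point of `conv (Q ∪ {p})` in the cone spanned at `p` by `a, b ∈ Q` but beyond the line `ab`
lies in `conv Q`. -/
lemma mem_hull_of_beyond {Q : Set (ℝ × ℝ)} {p a b x : ℝ × ℝ} (ha : a ∈ Q) (hb : b ∈ Q)
    (hD : 0 < cross p a b) (hx : x ∈ convexHull ℝ (insert p Q)) (h1 : 0 ≤ cross p a x)
    (h2 : 0 ≤ cross p x b) (h3 : cross a b x < 0) : x ∈ convexHull ℝ Q := by
  rw [convexHull_insert ⟨a, ha⟩, mem_convexJoin] at hx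
  obtain ⟨p', hp', y, hy, s, t, hs, ht, hst, hx⟩ := hx
  rw [Set.mem_singleton_iff] at hp'
  subst hp'
  -- `x - p = α (a - p) + β (b - p) = t (y - p)` with `t ≤ 1 < α + β`
  obtain ⟨α, hα⟩ : ∃ α, α = cross p' x b / cross p' a b := ⟨_, rfl⟩
  obtain ⟨β, hβ⟩ : ∃ β, β = cross p' a x / cross p' a b := ⟨_, rfl⟩
  have hα0 : 0 ≤ α := by rw [hα]; positivity
  have hβ0 : 0 ≤ β := by rw [hβ]; positivity
  have hσ : 1 < α + β := by
    rw [hα, hβ, ← add_div, lt_div_iff₀ hD]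
    simp only [cross] at *; linarith
  have ht1 : t ≤ 1 := by linarith
  have hd : 0 < α + β - t := by linarith
  have hrep1 : x.1 - p'.1 = α * (a.1 - p'.1) + β * (b.1 - p'.1) := by
    rw [hα, hβ]; field_simp; simp only [cross]; ring
  have hrep2 : x.2 - p'.2 = α * (a.2 - p'.2) + β * (b.2 - p'.2) := by
    rw [hα, hβ]; field_simp; simp only [cross]; ring
  have hy1 : x.1 - p'.1 = t * (y.1 - p'.1) := by
    rw [← hx]; simp; linear_combination p'.1 * hst
  have hy2 : x.2 - p'.2 = t * (y.2 - p'.2) := by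
    rw [← hx]; simp; linear_combination p'.2 * hst
  have hxe : x = ((1 - t) * α / (α + β - t)) • a + ((1 - t) * β / (α + β - t)) • b +
      (t * (α + β - 1) / (α + β - t)) • y := by
    ext
    · simp only [Prod.fst_add, Prod.smul_fst, smul_eq_mul]
      field_simp
      linear_combination (1 - t) * hrep1 + (α + β - 1) * hy1
    · simp only [Prod.snd_add, Prod.smul_snd, smul_eq_mul]
      field_simp
      linear_combination (1 - t) * hrep2 + (α + β - 1) * hy2
  rw [hxe]
  have ht1' : 0 ≤ 1 - t := by linarith
  have hσ' : 0 ≤ α + β - 1 := by linarith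
  refine (convex_convexHull ℝ _).three_mem (subset_convexHull ℝ _ ha) (subset_convexHull ℝ _ hb) hy
    (by positivity) (by positivity) (by positivity) ?_
  field_simp
  ring

/-- Every set of at least three points of `X` has a triangulation. A non-vertex is removed and put
back by `IsTriang.split`; a set in convex position is reduced by cutting off an ear. -/
theorem exists_triang {X : Finset (ℝ × ℝ)} (hX : GenPos X) (n : ℕ) :
    ∀ P ⊆ X, P.card = n + 3 → ∃ F, IsTriang X P F := by
  classical
  induction n with
  | zero =>
    intro P hP hcard
    refine ⟨{P}, by simp, by simpa using hcard,
      fun T hT x hx _ => (Finset.mem_singleton.1 hT) ▸ hx, by simp, by simp, ?_⟩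
    rw [nonExt_eq_empty hX hP (by omega)]
    simp [hcard]
  | succ n ih =>
    intro P hP hcard
    rcases (nonExt P).eq_empty_or_nonempty with hN | ⟨c, hc⟩
    swap
    · have hcP := (mem_nonExt.1 hc).1
      obtain ⟨F, hF⟩ := ih (P.erase c) ((Finset.erase_subset _ _).trans hP)
        (by rw [Finset.card_erase_of_mem hcP]; omega)
      exact hF.split hX hP hc
    -- `P` is in convex position: cut off the ear at `p`, with neighbours `a` and `b`
    obtain ⟨p, hpP, hpmin⟩ := exists_lexMin (P := P) (Finset.card_pos.1 (by omega))
    have hQcard : (P.erase p).card = n + 3 := by rw [Finset.card_erase_of_mem hpP]; omega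
    have hQP : P.erase p ⊆ P := Finset.erase_subset _ _
    have hQX := hQP.trans hP
    obtain ⟨⟨a, ha, haQ⟩, ⟨b, hb, hbQ⟩⟩ := exists_first (p := p) (Q := P.erase p)
      (Finset.card_pos.1 (by omega))
      fun q hq => hpmin q (Finset.mem_of_mem_erase hq) (Finset.ne_of_mem_erase hq)
    obtain ⟨F, hF⟩ := ih _ hQX hQcard
    obtain ⟨hap, haP⟩ := Finset.mem_erase.1 ha
    obtain ⟨hbp, hbP⟩ := Finset.mem_erase.1 hb
    have hab : a ≠ b := by
      rintro rfl
      obtain ⟨x, hx, hxa⟩ := Finset.exists_mem_ne (by omega : 1 < (P.erase p).card) a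
      have h1 := haQ x hx
      have h2 := hbQ x hx
      refine hX.cross_ne (hP hpP) (hP haP) (hQX hx) hap.symm (Finset.ne_of_mem_erase hx).symm
        hxa.symm ?_
      simp only [cross] at *; linarith
    have hD : 0 < cross p a b := (haQ b hb).lt_of_ne'
      (hX.cross_ne (hP hpP) (hP haP) (hP hbP) hap.symm hbp.symm hab)
    have hext : ∀ x ∈ P, ∀ S : Finset (ℝ × ℝ), S ⊆ P →
        x ∈ convexHull ℝ (S : Set (ℝ × ℝ)) → x ∈ S := by
      intro x hx S hS hxS
      by_contra hn
      have := mem_nonExt_of_mem_hull hx ((Finset.coe_subset.2 hS).trans (subset_convexHull ℝ _))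
        (by simpa using hn) hxS
      simp [hN] at this
    have hTP : ({p, a, b} : Finset (ℝ × ℝ)) ⊆ P := by
      intro y hy
      simp only [Finset.mem_insert, Finset.mem_singleton] at hy
      rcases hy with rfl | rfl | rfl <;> assumption
    have hT : ∀ x, x ∈ convexHull ℝ (({p, a, b} : Finset (ℝ × ℝ)) : Set (ℝ × ℝ)) ↔
        0 ≤ cross p a x ∧ 0 ≤ cross a b x ∧ 0 ≤ cross b p x := by
      intro x; push_cast; exact mem_triangle_iff hD
    have swap : ∀ x, cross b p x = cross p x b := by
      intro x; simp only [cross]; ring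
    have hself : cross p a p = 0 ∧ cross p p b = 0 := by simp [cross]
    -- the remaining points lie beyond the line `ab`
    have hfar : ∀ x ∈ P.erase p, 0 ≤ cross b a x := by
      intro x hx
      by_contra! hn
      have hxT : x ∈ ({p, a, b} : Finset (ℝ × ℝ)) := by
        refine hext x (hQP hx) _ hTP ((hT x).2 ⟨haQ x hx, ?_, by rw [swap]; exact hbQ x hx⟩)
        simp only [cross] at *; linarith
      simp only [Finset.mem_insert, Finset.mem_singleton] at hxT
      rcases hxT with rfl | rfl | rfl
      · simp at hx
      · simp [cross] at hn; linarith
      · simp [cross] at hn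
    have hpQ : p ∉ convexHull ℝ (↑(P.erase p) : Set (ℝ × ℝ)) := fun h => by
      simpa using hext p hpP _ hQP h
    have hNQ : nonExt (P.erase p) = ∅ := by
      rw [Finset.eq_empty_iff_forall_notMem]
      intro x hx
      obtain ⟨h1, h2⟩ := mem_nonExt.1 hx
      simpa using hext x (hQP h1) _ ((Finset.erase_subset _ _).trans hQP) h2
    have hTF : ({p, a, b} : Finset (ℝ × ℝ)) ∉ F := fun h => by
      simpa using hF.sub _ h (show p ∈ ({p, a, b} : Finset (ℝ × ℝ)) by simp)
    have hnot : ∀ x ∈ X, x ∉ P → ∀ T ∈ F, x ∈ convexHull ℝ (T : Set (ℝ × ℝ)) →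
        x ∉ convexHull ℝ (({p, a, b} : Finset (ℝ × ℝ)) : Set (ℝ × ℝ)) := by
      intro x hxX hxP T hTF hxT hx
      have h1 := ((hT x).1 hx).2.1
      have h2 : 0 ≤ cross b a x :=
        cross_nonneg_of_mem_hull (fun y hy => hfar y (hF.sub T hTF hy)) hxT
      refine hX.cross_ne (hP haP) (hP hbP) hxX hab (fun h => hxP (h ▸ haP))
        (fun h => hxP (h ▸ hbP)) ?_
      simp only [cross] at *; linarith
    refine ⟨insert {p, a, b} F, ?_, ?_, ?_, ?_, ?_, ?_⟩
    · intro T hT'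
      rcases Finset.mem_insert.1 hT' with rfl | h
      · exact hTP
      · exact (hF.sub T h).trans hQP
    · intro T hT'
      rcases Finset.mem_insert.1 hT' with rfl | h
      · exact Finset.card_eq_three.2 ⟨p, a, b, hap.symm, hbp.symm, hab, rfl⟩
      · exact hF.card_three T h
    · intro T hT' x hx hxT
      rcases Finset.mem_insert.1 hT' with rfl | h
      · exact hext x hx _ hTP hxT
      · exact hext x hx _ ((hF.sub T h).trans hQP) hxT
    · intro x hxX hxP hxH
      by_cases hxT : x ∈ convexHull ℝ (({p, a, b} : Finset (ℝ × ℝ)) : Set (ℝ × ℝ))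
      · exact ⟨_, by simp, hxT⟩
      have k1 : 0 ≤ cross p a x := by
        refine cross_nonneg_of_mem_hull (fun y hy => ?_) hxH
        by_cases h : y = p
        · rw [h, hself.1]
        · exact haQ y (Finset.mem_erase.2 ⟨h, hy⟩)
      have k2 : 0 ≤ cross b p x := by
        refine cross_nonneg_of_mem_hull (fun y hy => ?_) hxH
        rw [swap]
        by_cases h : y = p
        · rw [h, hself.2]
        · exact hbQ y (Finset.mem_erase.2 ⟨h, hy⟩)
      have k3 : cross a b x < 0 := by
        by_contra! h
        exact hxT ((hT x).2 ⟨k1, h, k2⟩)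
      have hins : (P : Set (ℝ × ℝ)) = insert p (↑(P.erase p) : Set (ℝ × ℝ)) := by
        rw [← Finset.coe_insert, Finset.insert_erase hpP]
      rw [hins] at hxH
      obtain ⟨T, hT1, hT2⟩ := hF.cover x hxX (fun h => hxP (hQP h))
        (mem_hull_of_beyond ha hb hD hxH k1 (by rwa [← swap]) k3)
      exact ⟨T, by simp [hT1], hT2⟩
    · intro x hxX hxP T hT1 T' hT2 hxT hxT'
      rcases Finset.mem_insert.1 hT1 with rfl | h1 <;> rcases Finset.mem_insert.1 hT2 with rfl | h2
      · rfl
      · exact absurd hxT (hnot x hxX hxP T' h2 hxT')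
      · exact absurd hxT' (hnot x hxX hxP T h1 hxT)
      · exact hF.disj x hxX (fun h => hxP (hQP h)) T h1 T' h2 hxT hxT'
    · have e1 := hF.card_eq
      rw [Finset.card_insert_of_notMem hTF, hN]
      rw [hNQ, hQcard] at e1
      simp at e1 ⊢
      omega

/-! ### Counting points in triangles -/

open Classical in
/-- The points of `X` of color `i` in the region `K`. -/
noncomputable def col (X : Finset (ℝ × ℝ)) (χ : ℝ × ℝ → Fin 3) (i : Fin 3) (K : Set (ℝ × ℝ)) :
    Finset (ℝ × ℝ) :=
  X.filter fun x => χ x = i ∧ x ∈ K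

lemma mem_col {X : Finset (ℝ × ℝ)} {χ : ℝ × ℝ → Fin 3} {i : Fin 3} {K : Set (ℝ × ℝ)}
    {x : ℝ × ℝ} : x ∈ col X χ i K ↔ x ∈ X ∧ χ x = i ∧ x ∈ K := by
  classical
  simp [col]

lemma col_mono {X : Finset (ℝ × ℝ)} {χ : ℝ × ℝ → Fin 3} {i : Fin 3} {K L : Set (ℝ × ℝ)}
    (h : K ⊆ L) : col X χ i K ⊆ col X χ i L := fun x hx => by
  rw [mem_col] at *; exact ⟨hx.1, hx.2.1, h hx.2.2⟩

open Classical in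
/-- A point set `P` is triangulated by `|P| + i - 2` triangles, where `i` counts the non-vertices of
its hull; so if each triangle of `P` contains `k` points, the hull contains that many times `k`. -/
lemma triangle_count {X P : Finset (ℝ × ℝ)} (hX : GenPos X) (hP : P ⊆ X) {k : ℕ}
    (hk : ∀ T ⊆ P, T.card = 3 → k ≤ intCount X T) :
    k * (P.card + (nonExt P).card) ≤
      (X.filter fun x => x ∉ P ∧ x ∈ convexHull ℝ (P : Set (ℝ × ℝ))).card + k * 2 := by
  rcases lt_or_ge P.card 3 with h | h
  · rw [nonExt_eq_empty hX hP h.le, Finset.card_empty]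
    have := Nat.mul_le_mul_left k (by omega : P.card + 0 ≤ 2)
    omega
  obtain ⟨F, hF⟩ := exists_triang hX (P.card - 3) P hP (by omega)
  have h1 : k * F.card ≤ (F.biUnion fun T =>
      X.filter fun x => x ∉ P ∧ x ∈ convexHull ℝ (T : Set (ℝ × ℝ))).card := by
    rw [Finset.card_biUnion]
    · rw [mul_comm]
      refine Finset.card_nsmul_le_sum F _ k fun T hT => ?_
      refine (hk T (hF.sub T hT) (hF.card_three T hT)).trans ?_
      rw [intCount, ← Set.ncard_coe_finset]
      refine Set.ncard_le_ncard ?_ (Finset.finite_toSet _)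
      rintro x ⟨⟨hxX, hxT⟩, hxn⟩
      simp only [Finset.coe_filter, Set.mem_ofPred_eq]
      exact ⟨hxX, fun hxP => hxn (hF.empty T hT x hxP hxT), hxT⟩
    · intro T hT T' hT' hne
      rw [Function.onFun, Finset.disjoint_left]
      intro x hx hx'
      rw [Finset.mem_filter] at hx hx'
      exact hne (hF.disj x hx.1 hx.2.1 T hT T' hT' hx.2.2 hx'.2.2)
  have h2 : (F.biUnion fun T =>
      X.filter fun x => x ∉ P ∧ x ∈ convexHull ℝ (T : Set (ℝ × ℝ))) ⊆
      X.filter fun x => x ∉ P ∧ x ∈ convexHull ℝ (P : Set (ℝ × ℝ)) := by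
    intro x hx
    obtain ⟨T, hT, hx⟩ := Finset.mem_biUnion.1 hx
    rw [Finset.mem_filter] at *
    exact ⟨hx.1, hx.2.1, convexHull_mono (Finset.coe_subset.2 (hF.sub T hT)) hx.2.2⟩
  have h3 := Finset.card_le_card h2
  rw [← hF.card_eq, mul_add]
  omega

/-- `triangle_count` for the points of color `i` in a convex region: all other points in their hull
have one of the colors `j` and `l`. -/
lemma color_count {X : Finset (ℝ × ℝ)} (hX : GenPos X) {χ : ℝ × ℝ → Fin 3} {i j l : Fin 3}
    (hall : ∀ c : Fin 3, c = i ∨ c = j ∨ c = l) {k : ℕ} (hk : ¬ HasTri X χ i k)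
    {K : Set (ℝ × ℝ)} (hK : Convex ℝ K) :
    (k + 1) * ((col X χ i K).card + (nonExt (col X χ i K)).card) ≤
      (col X χ j (convexHull ℝ (col X χ i K : Set (ℝ × ℝ)))).card +
      (col X χ l (convexHull ℝ (col X χ i K : Set (ℝ × ℝ)))).card + (k + 1) * 2 := by
  classical
  have hsub : col X χ i K ⊆ X := fun x hx => (mem_col.1 hx).1
  refine (triangle_count hX hsub fun T hT h3 => ?_).trans ?_
  · by_contra! h
    exact hk ⟨T, hT.trans hsub, h3, fun p hp => (mem_col.1 (hT hp)).2.1, by omega⟩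
  · refine Nat.add_le_add_right ((Finset.card_le_card ?_).trans (Finset.card_union_le _ _)) _
    intro x hx
    obtain ⟨hxX, hxn, hxH⟩ := Finset.mem_filter.1 hx
    have hxK : x ∈ K := convexHull_min (fun y hy => (mem_col.1 hy).2.2) hK hxH
    rw [Finset.mem_union, mem_col, mem_col]
    rcases hall (χ x) with h | h | h
    · exact absurd (mem_col.2 ⟨hxX, h, hxK⟩) hxn
    · exact Or.inl ⟨hxX, h, hxH⟩
    · exact Or.inr ⟨hxX, h, hxH⟩

/-- Points of color `i` in the hull of points of another color are not vertices of the hull of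
color `i`, provided the latter hull is the larger one. -/
lemma col_subset_nonExt {X : Finset (ℝ × ℝ)} {χ : ℝ × ℝ → Fin 3} {i j : Fin 3} (hij : i ≠ j)
    {P Q : Finset (ℝ × ℝ)} (hQ : ∀ x ∈ Q, χ x = j)
    (hQP : (Q : Set (ℝ × ℝ)) ⊆ convexHull ℝ (P : Set (ℝ × ℝ)))
    (hP : col X χ i (convexHull ℝ (P : Set (ℝ × ℝ))) ⊆ P) :
    col X χ i (convexHull ℝ (Q : Set (ℝ × ℝ))) ⊆ nonExt P := by
  intro x hx
  obtain ⟨hxX, hxi, hxH⟩ := mem_col.1 hx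
  refine mem_nonExt_of_mem_hull (hP ?_) hQP (fun h => hij (hxi ▸ hQ x h)) hxH
  exact mem_col.2 ⟨hxX, hxi, convexHull_min hQP (convex_convexHull ℝ _) hxH⟩

lemma col_hull_col_subset {X : Finset (ℝ × ℝ)} {χ : ℝ × ℝ → Fin 3} {i : Fin 3}
    {K : Set (ℝ × ℝ)} (hK : Convex ℝ K) :
    col X χ i (convexHull ℝ (col X χ i K : Set (ℝ × ℝ))) ⊆ col X χ i K :=
  col_mono (convexHull_min (fun _ hy => (mem_col.1 hy).2.2) hK)

lemma col_subset_region {X : Finset (ℝ × ℝ)} {χ : ℝ × ℝ → Fin 3} {i : Fin 3}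
    {K : Set (ℝ × ℝ)} : (col X χ i K : Set (ℝ × ℝ)) ⊆ K := fun _ hy => (mem_col.1 hy).2.2

open Classical in
/-- Let `P` be the points of color `i` in a convex region, and `Q` the points of color `j` in the
hull of `P`. Counting triangles of `P`, then triangles of `Q`, bounds `|P|` by the number of points
of the third color in the two hulls, because the points of `P` in the hull of `Q` are non-vertices of
`P`. The two summands besides `|P|` on the left measure the slack. -/
lemma two_step {X : Finset (ℝ × ℝ)} (hX : GenPos X) {χ : ℝ × ℝ → Fin 3} {i j l : Fin 3}
    (hall : ∀ c : Fin 3, c = i ∨ c = j ∨ c = l) (hij : i ≠ j) (hi : ¬ HasTri X χ i 0)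
    (hj : ¬ HasTri X χ j 0) {K : Set (ℝ × ℝ)} (hK : Convex ℝ K) {P Q : Finset (ℝ × ℝ)}
    (hP : P = col X χ i K) (hQ : Q = col X χ j (convexHull ℝ (P : Set (ℝ × ℝ)))) :
    P.card + (nonExt Q).card +
        ((nonExt P).filter fun x => x ∉ convexHull ℝ (Q : Set (ℝ × ℝ))).card ≤
      4 + (col X χ l (convexHull ℝ (P : Set (ℝ × ℝ)))).card +
        (col X χ l (convexHull ℝ (Q : Set (ℝ × ℝ)))).card := by
  have h1 := color_count hX hall hi hK
  have h2 := color_count hX (i := j) (j := i) (l := l)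
    (fun c => by rcases hall c with h | h | h <;> simp [h]) hj
    (convex_convexHull ℝ (P : Set (ℝ × ℝ)))
  rw [← hP, ← hQ] at h1
  rw [← hQ] at h2
  have hPP : col X χ i (convexHull ℝ (P : Set (ℝ × ℝ))) ⊆ P := by
    rw [hP]; exact col_hull_col_subset hK
  have h3 : col X χ i (convexHull ℝ (Q : Set (ℝ × ℝ))) ⊆
      (nonExt P).filter fun x => x ∈ convexHull ℝ (Q : Set (ℝ × ℝ)) := by
    intro x hx
    refine Finset.mem_filter.2 ⟨col_subset_nonExt hij (j := j) ?_ ?_ hPP hx, (mem_col.1 hx).2.2⟩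
    · rw [hQ]; exact fun _ hy => (mem_col.1 hy).2.1
    · rw [hQ]; exact col_subset_region
  have h4 := Finset.card_le_card h3
  have h5 := Finset.card_filter_add_card_filter_not (s := nonExt P)
    (fun x => x ∈ convexHull ℝ (Q : Set (ℝ × ℝ)))
  omega

/-! ### The upper bound -/

section Upper

variable {X : Finset (ℝ × ℝ)} {χ : ℝ × ℝ → Fin 3} {i j l : Fin 3}

/-- Points of color `l` in the hull of a set `P` of points of color `i` are non-vertices of the color
class `l`, if `P` lies in the hull of that class. -/
lemma third_subset_nonExt (hil : i ≠ l) {P : Finset (ℝ × ℝ)} (hP : ∀ x ∈ P, χ x = i)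
    (hPG : (P : Set (ℝ × ℝ)) ⊆ convexHull ℝ (col X χ l Set.univ : Set (ℝ × ℝ))) :
    col X χ l (convexHull ℝ (P : Set (ℝ × ℝ))) ⊆ nonExt (col X χ l Set.univ) :=
  col_subset_nonExt hil.symm hP hPG (col_mono (Set.subset_univ _))

/-- `two_step` inside the hull of the color class `l`, where all points of color `l` that are counted
are non-vertices of their class. -/
lemma card_in_third_le (hX : GenPos X) (hall : ∀ c : Fin 3, c = i ∨ c = j ∨ c = l) (hij : i ≠ j)
    (hil : i ≠ l) (hjl : j ≠ l) (hi : ¬ HasTri X χ i 0) (hj : ¬ HasTri X χ j 0) :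
    (col X χ i (convexHull ℝ (col X χ l Set.univ : Set (ℝ × ℝ)))).card ≤
      4 + 2 * (nonExt (col X χ l Set.univ)).card := by
  set K := convexHull ℝ (col X χ l Set.univ : Set (ℝ × ℝ)) with hK
  have hKc : Convex ℝ K := convex_convexHull ℝ _
  have h := two_step hX hall hij hi hj hKc rfl rfl
  have hPK : convexHull ℝ (col X χ i K : Set (ℝ × ℝ)) ⊆ K := convexHull_min col_subset_region hKc
  have h1 := Finset.card_le_card (third_subset_nonExt (X := X) (χ := χ) hil (P := col X χ i K)
    (fun _ hx => (mem_col.1 hx).2.1) col_subset_region)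
  have h2 := Finset.card_le_card (third_subset_nonExt (X := X) (χ := χ) hjl
    (P := col X χ j (convexHull ℝ (col X χ i K : Set (ℝ × ℝ))))
    (fun _ hx => (mem_col.1 hx).2.1) (col_subset_region.trans hPK))
  omega

/-- If `m` points of color `i` lie in the hull of a class `l` in convex position, then so do at least
`m - 2` points of color `j`, one in each triangle; hence color `j` occurs at least twice among five
or more points. -/
lemma two_le_card_in_third (hX : GenPos X) (hall : ∀ c : Fin 3, c = i ∨ c = j ∨ c = l)
    (hil : i ≠ l) (hi : ¬ HasTri X χ i 0) (hG : nonExt (col X χ l Set.univ) = ∅)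
    (h5 : 5 ≤ (col X χ i (convexHull ℝ (col X χ l Set.univ : Set (ℝ × ℝ)))).card +
      (col X χ j (convexHull ℝ (col X χ l Set.univ : Set (ℝ × ℝ)))).card) :
    2 ≤ (col X χ j (convexHull ℝ (col X χ l Set.univ : Set (ℝ × ℝ)))).card := by
  set K := convexHull ℝ (col X χ l Set.univ : Set (ℝ × ℝ)) with hK
  have hKc : Convex ℝ K := convex_convexHull ℝ _
  have h := color_count hX hall hi hKc
  have h1 := Finset.card_le_card (third_subset_nonExt (X := X) (χ := χ) hil (P := col X χ i K)
    (fun _ hx => (mem_col.1 hx).2.1) col_subset_region)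
  have h2 := Finset.card_le_card (col_mono (X := X) (χ := χ) (i := j)
    (convexHull_min (col_subset_region (X := X) (χ := χ) (i := i)) hKc))
  rw [hG, Finset.card_empty] at h1
  omega

/-- If all three points of color `l` lie in the hull of a set `P` of points of color `j`, then the
points of color `j` in the triangle they form are non-vertices of `P`. -/
lemma third_card_le (hjl : j ≠ l) (hG3 : (col X χ l Set.univ).card = 3)
    (h2 : 2 ≤ (col X χ j (convexHull ℝ (col X χ l Set.univ : Set (ℝ × ℝ)))).card)
    {K : Set (ℝ × ℝ)} (hK : Convex ℝ K) :
    (col X χ l (convexHull ℝ (col X χ j K : Set (ℝ × ℝ)))).card ≤ 3 ∧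
    ((col X χ l (convexHull ℝ (col X χ j K : Set (ℝ × ℝ)))).card = 3 →
      2 ≤ (nonExt (col X χ j K)).card) := by
  have hsub : col X χ l (convexHull ℝ (col X χ j K : Set (ℝ × ℝ))) ⊆ col X χ l Set.univ :=
    col_mono (Set.subset_univ _)
  refine ⟨hG3 ▸ Finset.card_le_card hsub, fun h3 => h2.trans (Finset.card_le_card ?_)⟩
  have heq := Finset.eq_of_subset_of_card_le hsub (by omega)
  refine col_subset_nonExt hjl (fun _ hx => (mem_col.1 hx).2.1) ?_ (col_hull_col_subset hK)
  rw [← heq]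
  exact col_subset_region

/-- If the non-vertices of the class `j` all lie in the hull of the class-`i` points of `conv j`,
and the latter are in convex position, then a triangle of color `l` inside `conv j` contains at most
two points of color `j`: three of them would be non-vertices of their class, so a point of color `i`
in their triangle would be a non-vertex of its own. -/
lemma card_in_third_le_two (hX : GenPos X) (hall : ∀ c : Fin 3, c = i ∨ c = j ∨ c = l)
    (hij : i ≠ j) (hjl : j ≠ l) (hj : ¬ HasTri X χ j 0)
    (hG : nonExt (col X χ l Set.univ) = ∅)
    (hGB : (col X χ l Set.univ : Set (ℝ × ℝ)) ⊆
      convexHull ℝ (col X χ j Set.univ : Set (ℝ × ℝ)))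
    (hR : nonExt (col X χ i (convexHull ℝ (col X χ j Set.univ : Set (ℝ × ℝ)))) = ∅)
    (hs : ∀ x ∈ nonExt (col X χ j Set.univ), x ∈ convexHull ℝ
      (col X χ i (convexHull ℝ (col X χ j Set.univ : Set (ℝ × ℝ))) : Set (ℝ × ℝ))) :
    (col X χ j (convexHull ℝ (col X χ l Set.univ : Set (ℝ × ℝ)))).card ≤ 2 := by
  set K := convexHull ℝ (col X χ l Set.univ : Set (ℝ × ℝ)) with hK
  set R := col X χ i (convexHull ℝ (col X χ j Set.univ : Set (ℝ × ℝ))) with hRdef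
  have hKc : Convex ℝ K := convex_convexHull ℝ _
  have h := color_count hX (i := j) (j := i) (l := l)
    (fun c => by rcases hall c with h | h | h <;> simp [h]) hj hKc
  have h1 := Finset.card_le_card (third_subset_nonExt (X := X) (χ := χ) hjl (P := col X χ j K)
    (fun _ hx => (mem_col.1 hx).2.1) col_subset_region)
  have hBsub : col X χ j K ⊆ nonExt (col X χ j Set.univ) :=
    col_subset_nonExt hjl (fun _ hx => (mem_col.1 hx).2.1) hGB
      (col_mono (Set.subset_univ _))
  have hRsub : col X χ i (convexHull ℝ (col X χ j K : Set (ℝ × ℝ))) ⊆ nonExt R := by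
    refine col_subset_nonExt hij (fun _ hx => (mem_col.1 hx).2.1) (fun x hx => hs x (hBsub hx)) ?_
    exact col_hull_col_subset (convex_convexHull ℝ _)
  have h2 := Finset.card_le_card hRsub
  rw [hR, Finset.card_empty] at h2
  rw [hG, Finset.card_empty] at h1
  omega

end Upper

theorem upper_bound {X : Finset (ℝ × ℝ)} (hcard : X.card = 21) (hX : GenPos X)
    (χ : ℝ × ℝ → Fin 3) : HasTri X χ 0 0 ∨ HasTri X χ 1 0 ∨ HasTri X χ 2 4 := by
  classical
  by_contra! hcon
  obtain ⟨h0, h1, h2⟩ := hcon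
  have hall01 : ∀ c : Fin 3, c = 0 ∨ c = 1 ∨ c = 2 := by decide
  have hall10 : ∀ c : Fin 3, c = 1 ∨ c = 0 ∨ c = 2 := by decide
  have hall20 : ∀ c : Fin 3, c = 2 ∨ c = 0 ∨ c = 1 := by decide
  have htot : (col X χ 0 Set.univ).card + (col X χ 1 Set.univ).card +
      (col X χ 2 Set.univ).card = 21 := by
    have := Finset.card_eq_sum_card_fiberwise (f := χ) (s := X) (t := Finset.univ) (by simp)
    rw [Fin.sum_univ_three, hcard] at this
    rw [this]
    simp [col]
  have hle : ∀ S : Set (ℝ × ℝ), (col X χ 2 S).card ≤ (col X χ 2 Set.univ).card :=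
    fun S => Finset.card_le_card (col_mono (Set.subset_univ _))
  have hc2 := color_count hX hall20 h2 convex_univ
  set G := col X χ 2 Set.univ with hG
  set R := col X χ 0 Set.univ with hR
  set B := col X χ 1 Set.univ with hB
  set K := convexHull ℝ (G : Set (ℝ × ℝ)) with hK
  have b0 := card_in_third_le hX hall01 (by decide) (by decide) (by decide) h0 h1
  have b1 := card_in_third_le hX hall10 (by decide) (by decide) (by decide) h1 h0
  rw [← hG, ← hK] at b0 b1
  have hg3 : G.card ≤ 3 := by omega
  have hGX : G ⊆ X := fun x hx => (mem_col.1 hx).1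
  have hGe : nonExt G = ∅ := nonExt_eq_empty hX hGX hg3
  have t0 := two_step hX hall01 (by decide) h0 h1 convex_univ hR rfl
  have t1 := two_step hX hall10 (by decide) h1 h0 convex_univ hB rfl
  set B' := col X χ 1 (convexHull ℝ (R : Set (ℝ × ℝ))) with hB'
  set R' := col X χ 0 (convexHull ℝ (B : Set (ℝ × ℝ))) with hR'
  have l1 := hle (convexHull ℝ (R : Set (ℝ × ℝ)))
  have l2 := hle (convexHull ℝ (B : Set (ℝ × ℝ)))
  have l3 := hle (convexHull ℝ (R' : Set (ℝ × ℝ)))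
  have l4 := hle (convexHull ℝ (B' : Set (ℝ × ℝ)))
  have hg : G.card = 3 := by omega
  rw [hGe, hg, Finset.card_empty] at hc2
  have k1 := two_le_card_in_third hX hall01 (by decide) h0 hGe (by rw [← hG, ← hK]; omega)
  have k0 := two_le_card_in_third hX hall10 (by decide) h1 hGe (by rw [← hG, ← hK]; omega)
  have f0 := third_card_le (by decide) hg k0 (convex_convexHull ℝ (B : Set (ℝ × ℝ)))
  have f1 := third_card_le (by decide) hg k1 (convex_convexHull ℝ (R : Set (ℝ × ℝ)))
  rw [← hR'] at f0
  rw [← hB'] at f1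
  obtain ⟨f0, f0'⟩ := f0
  obtain ⟨f1, f1'⟩ := f1
  rw [hg] at htot l1 l2
  -- all inequalities so far are tight
  have e1 : (nonExt R').card = 0 := by omega
  have e2 : (nonExt B').card = 0 := by omega
  have e3 : (col X χ 2 (convexHull ℝ (R : Set (ℝ × ℝ)))).card = 3 := by omega
  have e4 : (col X χ 2 (convexHull ℝ (B : Set (ℝ × ℝ)))).card = 3 := by omega
  have e5 : ((nonExt R).filter fun x => x ∉ convexHull ℝ (B' : Set (ℝ × ℝ))).card = 0 := by omega
  have e6 : ((nonExt B).filter fun x => x ∉ convexHull ℝ (R' : Set (ℝ × ℝ))).card = 0 := by omega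
  have hin : ∀ S : Set (ℝ × ℝ), (col X χ 2 S).card = 3 → (G : Set (ℝ × ℝ)) ⊆ S := by
    intro S hS
    have := Finset.eq_of_subset_of_card_le (col_mono (X := X) (χ := χ) (i := 2)
      (Set.subset_univ S)) (by rw [← hG, hg, hS])
    rw [← hG] at this
    rw [← this]
    exact col_subset_region
  rw [Finset.card_eq_zero, Finset.filter_eq_empty_iff] at e5 e6
  rw [Finset.card_eq_zero] at e1 e2
  have z1 := card_in_third_le_two hX hall01 (by decide) (by decide) h1 hGe (hin _ e4) e1
    (fun x hx => not_not.1 (e6 hx))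
  have z0 := card_in_third_le_two hX hall10 (by decide) (by decide) h0 hGe (hin _ e3) e2
    (fun x hx => not_not.1 (e5 hx))
  rw [← hG, ← hK] at z0 z1
  omega

/-! ### A configuration of twenty points -/

/-- Red points of the example. -/
def exRed : Finset (ℤ × ℤ) :=
  {(209, 197), (0, 190), (27, 47), (93, 0), (156, 21), (179, 50), (216, 164), (139, 46), (149, 92)}

/-- Blue points of the example. -/
def exBlue : Finset (ℤ × ℤ) :=
  {(143, 83), (134, 45), (140, 19), (168, 49), (213, 170), (153, 103), (226, 171), (237, 14)}

/-- Green points of the example. -/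
def exGreen : Finset (ℤ × ℤ) := {(168, 109), (153, 40), (43, 64)}

/-- All points of the example. -/
def exAll : Finset (ℤ × ℤ) := exRed ∪ exBlue ∪ exGreen

/-- The color classes of the example, indexed by color. -/
def exClass : Fin 3 → Finset (ℤ × ℤ) := ![exRed, exBlue, exGreen]

/-- The coloring of the example; integer points outside it are green as well. -/
def exCol (p : ℤ × ℤ) : Fin 3 := if p ∈ exRed then 0 else if p ∈ exBlue then 1 else 2

/-- `cross` on integer points, where it can be evaluated. -/
def icross (p q r : ℤ × ℤ) : ℤ :=
  (q.1 - p.1) * (r.2 - p.2) - (q.2 - p.2) * (r.1 - p.1)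

/-- The points of the example strictly inside the counterclockwise triangle `abc`. -/
def exInside (a b c : ℤ × ℤ) : Finset (ℤ × ℤ) :=
  exAll.filter fun d => 0 < icross a b d ∧ 0 < icross b c d ∧ 0 < icross c a d

/-- The inclusion of the integer lattice into the plane. -/
def toPlane (p : ℤ × ℤ) : ℝ × ℝ := (p.1, p.2)

lemma toPlane_injective : Function.Injective toPlane := by
  rintro ⟨a, b⟩ ⟨c, d⟩ h
  simpa [toPlane] using h

lemma cross_toPlane (a b c : ℤ × ℤ) :
    cross (toPlane a) (toPlane b) (toPlane c) = (icross a b c : ℝ) := by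
  simp [cross, toPlane, icross]

lemma cross_toPlane_pos {a b c : ℤ × ℤ} :
    0 < cross (toPlane a) (toPlane b) (toPlane c) ↔ 0 < icross a b c := by
  rw [cross_toPlane]; exact_mod_cast Iff.rfl

lemma icross_swap (a b c : ℤ × ℤ) : icross a c b = -icross a b c := by
  simp only [icross]; ring

lemma exAll_card : exAll.card = 20 := by decide +kernel

lemma exAll_icross_ne : ∀ a ∈ exAll, ∀ b ∈ exAll, ∀ c ∈ exAll,
    a ≠ b → a ≠ c → b ≠ c → icross a b c ≠ 0 := by decide +kernel

lemma mem_exClass : ∀ a ∈ exAll, a ∈ exClass (exCol a) := by decide +kernel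

/-- Every counterclockwise triangle of color `i` has enough points strictly inside:
at least one for red and blue, at least five for green. -/
lemma exInside_card : ∀ i : Fin 3, ∀ a ∈ exClass i, ∀ b ∈ exClass i, ∀ c ∈ exClass i,
    0 < icross a b c → (![0, 0, 4] : Fin 3 → ℕ) i < (exInside a b c).card := by decide +kernel

open Classical in
/-- The example as a set of points of the plane. -/
noncomputable def exSet : Finset (ℝ × ℝ) := exAll.image toPlane

/-- The coloring of the example, extended to the whole plane by rounding down. -/
noncomputable def exColoring (p : ℝ × ℝ) : Fin 3 := exCol (⌊p.1⌋, ⌊p.2⌋)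

lemma exColoring_toPlane (a : ℤ × ℤ) : exColoring (toPlane a) = exCol a := by
  simp [exColoring, toPlane]

lemma mem_exSet {x : ℝ × ℝ} : x ∈ exSet ↔ ∃ a ∈ exAll, toPlane a = x := by
  classical
  simp only [exSet, Finset.mem_image]

lemma exSet_card : exSet.card = 20 := by
  classical
  rw [exSet, Finset.card_image_of_injective _ toPlane_injective, exAll_card]

lemma exSet_genPos : GenPos exSet := by
  intro p hp q hq r hr hpq hpr hqr
  obtain ⟨a, ha, rfl⟩ := mem_exSet.1 hp
  obtain ⟨b, hb, rfl⟩ := mem_exSet.1 hq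
  obtain ⟨c, hc, rfl⟩ := mem_exSet.1 hr
  rw [collinear_iff_cross hpq, cross_toPlane]
  exact_mod_cast exAll_icross_ne a ha b hb c hc (fun h => hpq (h ▸ rfl))
    (fun h => hpr (h ▸ rfl)) (fun h => hqr (h ▸ rfl))

lemma exInside_card_le_intCount {a b c : ℤ × ℤ} {C : Finset (ℝ × ℝ)}
    (hC : C = {toPlane a, toPlane b, toPlane c}) (h : 0 < icross a b c) :
    (exInside a b c).card ≤ intCount exSet C := by
  classical
  rw [intCount, ← Finset.card_image_of_injective _ toPlane_injective, ← Set.ncard_coe_finset]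
  apply Set.ncard_le_ncard _ ((exSet.finite_toSet.inter_of_left _).sdiff)
  intro x hx
  obtain ⟨d, hd, rfl⟩ := Finset.mem_image.1 (Finset.mem_coe.1 hx)
  obtain ⟨hdA, h1, h2, h3⟩ := Finset.mem_filter.1 hd
  refine ⟨⟨Finset.mem_coe.2 (mem_exSet.2 ⟨d, hdA, rfl⟩), ?_⟩, ?_⟩
  · rw [hC]
    push_cast
    exact (mem_triangle_iff (cross_toPlane_pos.2 h)).2
      ⟨(cross_toPlane_pos.2 h1).le, (cross_toPlane_pos.2 h2).le, (cross_toPlane_pos.2 h3).le⟩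
  · -- A vertex of the triangle lies on two of its sides, so it is not strictly inside.
    rw [hC]
    simp only [Finset.coe_insert, Finset.coe_singleton, Set.mem_insert_iff,
      Set.mem_singleton_iff, toPlane_injective.eq_iff]
    rintro (rfl | rfl | rfl) <;> simp [icross, mul_comm] at h1 h2 h3

lemma not_hasTri_exSet (i : Fin 3) : ¬ HasTri exSet exColoring i ((![0, 0, 4] : Fin 3 → ℕ) i) := by
  classical
  rintro ⟨C, hCX, hC3, hcol, hcount⟩
  obtain ⟨x, y, z, hxy, hxz, hyz, hC⟩ := Finset.card_eq_three.1 hC3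
  have key : ∀ w ∈ C, ∃ a ∈ exAll, a ∈ exClass i ∧ toPlane a = w := by
    intro w hw
    obtain ⟨a, ha, rfl⟩ := mem_exSet.1 (hCX hw)
    refine ⟨a, ha, ?_, rfl⟩
    have := mem_exClass a ha
    rwa [← exColoring_toPlane, hcol _ hw] at this
  obtain ⟨a, haA, ha, rfl⟩ := key x (by simp [hC])
  obtain ⟨b, hbA, hb, rfl⟩ := key y (by simp [hC])
  obtain ⟨c, hcA, hc, rfl⟩ := key z (by simp [hC])
  have hne := exAll_icross_ne a haA b hbA c hcA (fun h => hxy (h ▸ rfl))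
    (fun h => hxz (h ▸ rfl)) (fun h => hyz (h ▸ rfl))
  rcases lt_or_gt_of_ne hne with hlt | hgt
  · have hpos : 0 < icross a c b := by rw [icross_swap]; omega
    have hC' : C = {toPlane a, toPlane c, toPlane b} := by
      rw [hC, Finset.pair_comm]
    have h1 := exInside_card i a ha c hc b hb hpos
    have h2 := exInside_card_le_intCount hC' hpos
    omega
  · have h1 := exInside_card i a ha b hb c hc hgt
    have h2 := exInside_card_le_intCount hC hgt
    omega

/-- h(3,0;3,0;3,4) = 21. -/
theorem h_303034_eq_21 :
    (∀ X : Finset (ℝ × ℝ), X.card = 21 → GenPos X →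
      ∀ χ : ℝ × ℝ → Fin 3, HasTri X χ 0 0 ∨ HasTri X χ 1 0 ∨ HasTri X χ 2 4) ∧
    (∃ X : Finset (ℝ × ℝ), X.card = 20 ∧ GenPos X ∧
      ∃ χ : ℝ × ℝ → Fin 3, ¬ HasTri X χ 0 0 ∧ ¬ HasTri X χ 1 0 ∧ ¬ HasTri X χ 2 4) :=
  ⟨fun _ hcard hX χ => upper_bound hcard hX χ,
    exSet, exSet_card, exSet_genPos, exColoring,
    not_hasTri_exSet 0, not_hasTri_exSet 1, not_hasTri_exSet 2⟩
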